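/- arXiv:2110.05349 — 2 statements merged into one kernel-verified Lean document; each statement's English description precedes it below -/
import Mathlib

section
/- For every odd r ≥ 3, the grid hypergraph H_r is not positive. -/
open MeasureTheory
open scoped Classical

/-- Homomorphism density of a symmetric `r`-variable kernel in an `r`-graph whose
edges are indexed by `E` and given as (injective) `r`-tuples of vertices:
`t_H(f) = ∫ ∏_{e ∈ E(H)} f(x_{e 0}, …, x_{e (r-1)}) dx`. -/
noncomputable def hypDensity {V E : Type} [Fintype V] [Fintype E] (r : ℕ)
    (edge : E → Fin r → V) (f : (Fin r → unitInterval) → ℝ) : ℝ :=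
  ∫ x : V → unitInterval, ∏ e : E, f (fun i => x (edge e i))

/-- An `r`-graph is positive if `t_H(f) ≥ 0` for every bounded measurable
symmetric kernel `f : [0,1]^r → ℝ`. -/
def HypPositive {V E : Type} [Fintype V] [Fintype E] (r : ℕ)
    (edge : E → Fin r → V) : Prop :=
  ∀ f : (Fin r → unitInterval) → ℝ,
    (∀ (σ : Equiv.Perm (Fin r)) (v : Fin r → unitInterval), f (v ∘ σ) = f v) →
    Measurable f → (∃ C, ∀ v, |f v| ≤ C) →
    0 ≤ hypDensity r edge f

/-- The vertex set of an edge of an `r`-graph. -/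
noncomputable def hedgeSet {V E : Type} [Fintype V] (r : ℕ) (edge : E → Fin r → V) (e : E) :
    Finset V :=
  Finset.image (edge e) Finset.univ
/-- The edges of the `r × r` grid `r`-graph `H_r`: its vertices are the nodes of an
`r × r` grid, `Sum.inl i` is the `i`-th row and `Sum.inr j` is the `j`-th column. -/
def gridEdge (r : ℕ) : (Fin r ⊕ Fin r) → Fin r → Fin r × Fin r
  | Sum.inl i => fun j => (i, j)
  | Sum.inr j => fun i => (i, j)

/-!
On finitely many labels, take a kernel `D` supported on constant tuples and a kernel `S` supported
on injective ones, and test the grid against `D ⊗ S - S ⊗ D`. For odd `r ≥ 3` an array whose rows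
or columns mix the two summands contributes nothing, so the density is a positive multiple of
`t(D, D) t(S, S) - t(D, S) ^ 2`, where `t(F, G)` puts `F` on the rows and `G` on the columns.
For `S` the product of two signs, `t(S, S)` is the square of the Alon-Tarsi sum, which vanishes
for odd `r`. Restricting `D` to pairs `(a, a)` makes the terms of `t(D, S)` products of squares,
so that `t(D, S) > 0`.
-/

section GridSum

variable {ι α β R : Type*} [Fintype ι]

lemma prod_sub_eq_prod_sub_prod [CommRing R] {a b : ι → R} (hodd : Odd (Fintype.card ι))
    (h : (∀ i, a i = 0) ∨ ∀ i, b i = 0) : ∏ i, (a i - b i) = ∏ i, a i - ∏ i, b i := by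
  have : Nonempty ι := Fintype.card_pos_iff.1 hodd.pos
  rcases h with ha | hb
  · simp [ha, Finset.prod_neg, hodd.neg_one_pow]
  · simp [hb]

variable [DecidableEq ι] [Fintype α] [Fintype β]

/-- The density of the grid hypergraph, with the vertices labelled by a finite type, unnormalised,
and with separate kernels `F` for the rows and `G` for the columns. -/
def gridSum [CommSemiring R] (F G : (ι → α) → R) : R :=
  ∑ M : ι → ι → α, (∏ i, F (M i)) * ∏ j, G (fun i => M i j)

lemma gridSum_comm [CommSemiring R] (F G : (ι → α) → R) : gridSum F G = gridSum G F :=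
  Fintype.sum_equiv (Equiv.piComm _) _ _ fun _ => mul_comm _ _

lemma gridSum_sub_left [CommRing R] {F G H : (ι → α) → R} (hodd : Odd (Fintype.card ι))
    (h : ∀ (M : ι → ι → α) (i i' : ι), F (M i) ≠ 0 → G (M i') ≠ 0 →
      ∃ j, H (fun i => M i j) = 0) :
    gridSum (F - G) H = gridSum F H - gridSum G H := by
  simp only [gridSum, ← Finset.sum_sub_distrib, ← sub_mul, Pi.sub_apply]
  refine Finset.sum_congr rfl fun M _ => ?_
  by_cases hpure : (∀ i, F (M i) = 0) ∨ ∀ i, G (M i) = 0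
  · rw [prod_sub_eq_prod_sub_prod hodd hpure]
  · push Not at hpure
    obtain ⟨⟨i, hi⟩, i', hi'⟩ := hpure
    obtain ⟨j, hj⟩ := h M i i' hi hi'
    have hcolumns : ∏ j, H (fun i => M i j) = 0 := Finset.prod_eq_zero (Finset.mem_univ j) hj
    simp only [hcolumns, mul_zero]

lemma gridSum_sub_sub [CommRing R] {F G : (ι → α) → R} (hodd : Odd (Fintype.card ι))
    (h : ∀ (M : ι → ι → α) (i i' : ι), F (M i) ≠ 0 → G (M i') ≠ 0 →
      ∃ j, F (fun i => M i j) = 0 ∧ G (fun i => M i j) = 0) :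
    gridSum (F - G) (F - G) = gridSum F F - 2 * gridSum F G + gridSum G G := by
  have expand_left {H : (ι → α) → R}
      (hH : ∀ l, F l = 0 → G l = 0 → H l = 0) :
      gridSum (F - G) H = gridSum F H - gridSum G H :=
    gridSum_sub_left hodd fun M i i' hi hi' =>
      (h M i i' hi hi').imp fun _ hj => hH _ hj.1 hj.2
  rw [expand_left fun l hF hG => by simp [hF, hG], gridSum_comm F, gridSum_comm G,
    expand_left fun _ hF _ => hF, expand_left fun _ _ hG => hG, gridSum_comm G F]
  ring

/-- Exchanging two rows of the array preserves the product over the rows and changes the sign of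
each of the oddly many columns. -/
lemma gridSum_eq_zero_of_alternating [CommRing R] [IsAddTorsionFree R] [Nontrivial ι]
    {F G : (ι → α) → R} (hodd : Odd (Fintype.card ι))
    (hG : ∀ (σ : Equiv.Perm ι) (u : ι → α), G (u ∘ σ) = Equiv.Perm.sign σ • G u) :
    gridSum F G = 0 := by
  obtain ⟨a, b, hab⟩ := exists_pair_ne ι
  let σ := Equiv.swap a b
  have hcol (u : ι → α) : G (u ∘ σ) = -G u := by
    simp [hG, σ, Equiv.Perm.sign_swap hab]
  suffices gridSum F G = -gridSum F G from self_eq_neg.1 this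
  calc gridSum F G
      = ∑ M : ι → ι → α, (∏ i, F (M (σ i))) * ∏ j, G ((fun i => M i j) ∘ σ) :=
        ((Equiv.arrowCongr σ.symm (Equiv.refl (ι → α))).sum_comp _).symm
    _ = ∑ M : ι → ι → α, -((∏ i, F (M i)) * ∏ j, G (fun i => M i j)) :=
        Finset.sum_congr rfl fun M _ => by
          simp only [hcol, Finset.prod_neg, Finset.card_univ, hodd.neg_one_pow, neg_mul, one_mul,
            mul_neg, Equiv.prod_comp σ fun i => F (M i)]
    _ = -gridSum F G := Finset.sum_neg_distrib _

/-- The tensor product of two kernels, a kernel on pairs of labels. -/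
def tensorKernel [Mul R] (F : (ι → α) → R) (G : (ι → β) → R) (l : ι → α × β) : R :=
  F (Prod.fst ∘ l) * G (Prod.snd ∘ l)

lemma gridSum_tensorKernel [CommSemiring R] (F F' : (ι → α) → R) (G G' : (ι → β) → R) :
    gridSum (tensorKernel F G) (tensorKernel F' G') = gridSum F F' * gridSum G G' := by
  let splitEntries : (ι → ι → α × β) ≃ (ι → ι → α) × (ι → ι → β) :=
    (Equiv.arrowCongr (Equiv.refl ι) (Equiv.arrowProdEquivProdArrow ι _ _)).trans
      (Equiv.arrowProdEquivProdArrow ι _ _)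
  simp only [gridSum, Fintype.sum_mul_sum, ← Fintype.sum_prod_type']
  refine Fintype.sum_equiv splitEntries _ _ fun M => ?_
  simp only [tensorKernel, Finset.prod_mul_distrib]
  exact mul_mul_mul_comm _ _ _ _

end GridSum

section Antisymmetrization

variable {ι α R : Type*} [Fintype ι] {D S : (ι → α) → R}

/-- In a column with a nonzero value, either the first labels are constant or the second ones are.
Both row `i` and row `i'` being nonzero, the former happens in at most one column and so does the
latter. -/
lemma exists_column_tensorKernel_eq_zero [MulZeroClass R] (hcard : 3 ≤ Fintype.card ι)
    (hD : ∀ p, D p ≠ 0 → ∃ a, p = Function.const ι a) (hS : ∀ q, S q ≠ 0 → Function.Injective q)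
    {M : ι → ι → α × α} {i i' : ι} (hi : tensorKernel D S (M i) ≠ 0)
    (hi' : tensorKernel S D (M i') ≠ 0) :
    ∃ j, tensorKernel D S (fun k => M k j) = 0 ∧ tensorKernel S D (fun k => M k j) = 0 := by
  obtain ⟨a, ha⟩ := hD _ (left_ne_zero_of_mul hi)
  obtain ⟨b, hb⟩ := hD _ (right_ne_zero_of_mul hi')
  have snd_injective := hS _ (right_ne_zero_of_mul hi)
  have fst_injective := hS _ (left_ne_zero_of_mul hi')
  by_contra! hcol
  have hcover (j : ι) : (M i' j).1 = a ∨ (M i j).2 = b := by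
    by_cases hj : tensorKernel D S (fun k => M k j) = 0
    · obtain ⟨c, hc⟩ := hD _ (right_ne_zero_of_mul (hcol j hj))
      exact .inr <| (congrFun hc i).trans <| (congrFun hc i').symm.trans (congrFun hb j)
    · obtain ⟨c, hc⟩ := hD _ (left_ne_zero_of_mul hj)
      exact .inl <| (congrFun hc i').trans <| (congrFun hc i).symm.trans (congrFun ha j)
  have hfst (j k : ι) (hj : (M i' j).1 = a) (hk : (M i' k).1 = a) : j = k :=
    fst_injective (hj.trans hk.symm)
  have hsnd (j k : ι) (hj : (M i j).2 = b) (hk : (M i k).2 = b) : j = k :=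
    snd_injective (hj.trans hk.symm)
  obtain ⟨x, y, z, hxy, hxz, hyz⟩ := Fintype.two_lt_card_iff.1 hcard
  have hx := hcover x
  have hy := hcover y
  have hz := hcover z
  grind

variable [DecidableEq ι] [Fintype α] [CommRing R]

lemma gridSum_antisymmetrization (hodd : Odd (Fintype.card ι)) (hcard : 3 ≤ Fintype.card ι)
    (hD : ∀ p, D p ≠ 0 → ∃ a, p = Function.const ι a)
    (hS : ∀ q, S q ≠ 0 → Function.Injective q) :
    gridSum (tensorKernel D S - tensorKernel S D) (tensorKernel D S - tensorKernel S D) =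
      2 * (gridSum D D * gridSum S S - gridSum D S ^ 2) := by
  rw [gridSum_sub_sub hodd fun M i i' => exists_column_tensorKernel_eq_zero hcard hD hS]
  simp only [gridSum_tensorKernel, gridSum_comm S D]
  ring

end Antisymmetrization

section ConstDiag

variable {ι α : Type*}

/-- The indicator of the constant tuples whose value lies on the diagonal of `α × α`. -/
noncomputable def constDiag : (ι → α × α) → ℝ :=
  (Set.range fun a : α => Function.const ι (a, a)).indicator 1

lemma constDiag_const (a : α) : constDiag (Function.const ι (a, a)) = 1 :=
  Set.indicator_of_mem (Set.mem_range_self a) 1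

lemma exists_eq_const_of_constDiag_ne_zero {p : ι → α × α} (hp : constDiag p ≠ 0) :
    ∃ a, p = Function.const ι (a, a) :=
  (Set.mem_of_indicator_ne_zero hp).imp fun _ => Eq.symm

lemma constDiag_nonneg (p : ι → α × α) : 0 ≤ constDiag p :=
  Set.indicator_nonneg (fun _ _ => zero_le_one) p

lemma constDiag_comp_perm (σ : Equiv.Perm ι) (p : ι → α × α) :
    constDiag (p ∘ σ) = constDiag p := by
  have hmem : p ∘ σ ∈ (Set.range fun a : α => Function.const ι (a, a)) ↔
      p ∈ Set.range fun a : α => Function.const ι (a, a) :=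
    exists_congr fun a =>
      σ.surjective.injective_comp_right.eq_iff (a := Function.const ι (a, a))
  simp only [constDiag, Set.indicator_apply, hmem, Pi.one_apply]

end ConstDiag

section GridKernel

variable {ι : Type*} [Fintype ι] [DecidableEq ι]

/-- The sign of a self-map: that of the permutation if it is bijective, and `0` otherwise. -/
def mapSign (u : ι → ι) : ℝ :=
  Matrix.det fun i => (Pi.single (u i) 1 : ι → ℝ)

lemma mapSign_comp_perm (σ : Equiv.Perm ι) (u : ι → ι) :
    mapSign (u ∘ σ) = Equiv.Perm.sign σ • mapSign u :=
  Matrix.detRowAlternating.map_perm (fun i => (Pi.single (u i) 1 : ι → ℝ)) σ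

lemma injective_of_mapSign_ne_zero {u : ι → ι} (hu : mapSign u ≠ 0) : Function.Injective u := by
  contrapose! hu
  exact Matrix.detRowAlternating.map_eq_zero_of_not_injective _ fun hrows =>
    hu (.of_comp (f := fun k => (Pi.single k 1 : ι → ℝ)) hrows)

lemma mapSign_id : mapSign (id : ι → ι) = 1 := by
  have hrows : (fun i => (Pi.single (id i) 1 : ι → ℝ)) = (1 : Matrix ι ι ℝ) :=
    Matrix.ext fun i j => by rw [Matrix.one_eq_pi_single, id]
  rw [mapSign, hrows, Matrix.det_one]

/-- The symmetric kernel on pairs given by the product of the signs of both coordinates. -/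
def pairSign : (ι → ι × ι) → ℝ :=
  tensorKernel mapSign mapSign

lemma pairSign_comp_perm (σ : Equiv.Perm ι) (q : ι → ι × ι) : pairSign (q ∘ σ) = pairSign q := by
  simp only [pairSign, tensorKernel, ← Function.comp_assoc, mapSign_comp_perm,
    smul_mul_smul_comm, Int.units_mul_self, one_smul]

lemma injective_of_pairSign_ne_zero {q : ι → ι × ι} (hq : pairSign q ≠ 0) :
    Function.Injective q :=
  .of_comp (injective_of_mapSign_ne_zero (left_ne_zero_of_mul hq))

lemma pairSign_nonneg {q : ι → ι × ι} (hq : ∀ k, (q k).1 = (q k).2) : 0 ≤ pairSign q := by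
  have hcoord : Prod.fst ∘ q = Prod.snd ∘ q := funext hq
  simp only [pairSign, tensorKernel, hcoord, mul_self_nonneg]

lemma gridSum_pairSign_self [Nontrivial ι] (hodd : Odd (Fintype.card ι)) :
    gridSum (pairSign (ι := ι)) pairSign = 0 := by
  rw [pairSign, gridSum_tensorKernel, gridSum_eq_zero_of_alternating hodd mapSign_comp_perm,
    zero_mul]

lemma gridSum_constDiag_pairSign_pos : 0 < gridSum constDiag (pairSign (ι := ι)) := by
  refine Finset.sum_pos' (fun M _ => ?_) ⟨fun i _ => (i, i), Finset.mem_univ _, ?_⟩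
  · by_cases hrows : ∀ i, constDiag (M i) ≠ 0
    · refine mul_nonneg (Finset.prod_nonneg fun i _ => constDiag_nonneg _)
        (Finset.prod_nonneg fun j _ => pairSign_nonneg fun i => ?_)
      obtain ⟨a, ha⟩ := exists_eq_const_of_constDiag_ne_zero (hrows i)
      simp only [ha, Function.const_apply]
    · push Not at hrows
      obtain ⟨i, hi⟩ := hrows
      have hprod : ∏ i, constDiag (M i) = 0 := Finset.prod_eq_zero (Finset.mem_univ i) hi
      rw [hprod, zero_mul]
  · have hrow (i : ι) : constDiag (fun _ : ι => (i, i)) = 1 := constDiag_const i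
    have hcolumn : pairSign (fun i : ι => (i, i)) = 1 :=
      (congrArg₂ _ mapSign_id mapSign_id).trans (one_mul 1)
    simp only [hrow, hcolumn, Finset.prod_const_one, mul_one, zero_lt_one]

/-- The symmetric kernel witnessing that the grid is not positive. A label consists of two pairs;
the first summand is meant for rows and the second, with the pairs exchanged, for columns. -/
noncomputable def gridKernel : (ι → (ι × ι) × (ι × ι)) → ℝ :=
  tensorKernel constDiag pairSign - tensorKernel pairSign constDiag

lemma gridKernel_comp_perm (σ : Equiv.Perm ι) (l : ι → (ι × ι) × (ι × ι)) :
    gridKernel (l ∘ σ) = gridKernel l := by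
  simp only [gridKernel, tensorKernel, Pi.sub_apply, ← Function.comp_assoc, constDiag_comp_perm,
    pairSign_comp_perm]

lemma gridSum_gridKernel_neg (hodd : Odd (Fintype.card ι)) (hcard : 3 ≤ Fintype.card ι) :
    gridSum (gridKernel (ι := ι)) gridKernel < 0 := by
  have : Nontrivial ι := Fintype.one_lt_card_iff_nontrivial.1 (by lia)
  have hconst (p : ι → ι × ι) (hp : constDiag p ≠ 0) : ∃ a, p = Function.const ι a :=
    (exists_eq_const_of_constDiag_ne_zero hp).imp' _ fun _ => id
  have hpos := pow_pos (gridSum_constDiag_pairSign_pos (ι := ι)) 2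
  rw [gridKernel, gridSum_antisymmetrization hodd hcard hconst fun _ =>
    injective_of_pairSign_ne_zero, gridSum_pairSign_self hodd]
  linarith

end GridKernel

section Positivity

variable {V E : Type} {Ω : Type*} [Fintype V] [Fintype E] {r : ℕ} {edge : E → Fin r → V}

lemma HypPositive.integral_nonneg [MeasurableSpace Ω] [StandardBorelSpace Ω]
    (hpos : HypPositive r edge) (μ : Measure Ω) [IsProbabilityMeasure μ] {f : (Fin r → Ω) → ℝ}
    (hsymm : ∀ (σ : Equiv.Perm (Fin r)) (v : Fin r → Ω), f (v ∘ σ) = f v)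
    (hmeas : Measurable f) (hbdd : ∃ C, ∀ v, |f v| ≤ C) :
    0 ≤ ∫ x, ∏ e, f (x ∘ edge e) ∂Measure.pi fun _ : V => μ := by
  have : Nonempty Ω := μ.nonempty_of_neZero
  obtain ⟨Φ, hΦ, hmap⟩ := μ.exists_measurable_map_eq
  have hpres : MeasurePreserving (fun (x : V → unitInterval) v => Φ (x v)) volume
      (Measure.pi fun _ => μ) :=
    measurePreserving_pi _ _ fun _ => ⟨hΦ, hmap⟩
  have hprod : Measurable fun x : V → Ω => ∏ e, f (x ∘ edge e) := by
    fun_prop [Function.comp_def]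
  rw [← hpres.map_eq, integral_map hpres.aemeasurable hprod.aestronglyMeasurable]
  obtain ⟨C, hC⟩ := hbdd
  exact hpos (fun v => f (Φ ∘ v)) (fun σ v => hsymm σ (Φ ∘ v)) (by fun_prop) ⟨C, fun v => hC _⟩

lemma HypPositive.sum_nonneg [DecidableEq V] [Fintype Ω] [Nonempty Ω]
    (hpos : HypPositive r edge) {f : (Fin r → Ω) → ℝ}
    (hsymm : ∀ (σ : Equiv.Perm (Fin r)) (v : Fin r → Ω), f (v ∘ σ) = f v) :
    0 ≤ ∑ x : V → Ω, ∏ e, f (x ∘ edge e) := by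
  let : MeasurableSpace Ω := ⊤
  have : DiscreteMeasurableSpace Ω := ⟨fun _ => trivial⟩
  let μ : Measure Ω := ProbabilityTheory.uniformOn Set.univ
  have hatom (x : V → Ω) : (Measure.pi fun _ => μ).real {x} =
      (Fintype.card Ω : ℝ)⁻¹ ^ Fintype.card V := by
    simp [Measure.real, Measure.pi_singleton, μ, ProbabilityTheory.uniformOn_univ]
  obtain ⟨C, hC⟩ := (Set.finite_range fun v => |f v|).bddAbove
  have hint := hpos.integral_nonneg μ hsymm (measurable_of_finite f) ⟨C, fun v => hC ⟨v, rfl⟩⟩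
  simp only [integral_fintype .of_finite, hatom, smul_eq_mul, ← Finset.mul_sum] at hint
  exact (mul_nonneg_iff_of_pos_left (by positivity)).1 hint

lemma HypPositive.gridSum_self_nonneg [Fintype Ω] [Nonempty Ω] (hpos : HypPositive r (gridEdge r))
    {f : (Fin r → Ω) → ℝ}
    (hsymm : ∀ (σ : Equiv.Perm (Fin r)) (v : Fin r → Ω), f (v ∘ σ) = f v) :
    0 ≤ gridSum f f := by
  refine (hpos.sum_nonneg hsymm).trans_eq <|
    Fintype.sum_equiv (Equiv.curry _ _ _) _ _ fun x => ?_
  rw [Fintype.prod_sum_type]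
  rfl

end Positivity

/-- **Proposition 5.** The grid hypergraph `H_r` is not positive for odd `r ≥ 3`. -/
theorem grid_hypergraph_not_positive (r : ℕ) (hr : 3 ≤ r) (hodd : Odd r) :
    ¬ HypPositive r (gridEdge r) := by
  intro hpos
  have : Nonempty (Fin r) := Fin.pos_iff_nonempty.1 (by lia)
  have hneg : gridSum (gridKernel (ι := Fin r)) gridKernel < 0 :=
    gridSum_gridKernel_neg (by rwa [Fintype.card_fin]) (by rwa [Fintype.card_fin])
  exact (hpos.gridSum_self_nonneg gridKernel_comp_perm).not_gt hneg
end

section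
/- For every odd r ≥ 3, the 1-subdivision of the complete bipartite graph K_{r,r} is not a positive graph. -/
open MeasureTheory
open scoped Classical

noncomputable section

/-- Homomorphism density of a symmetric kernel `f` in a finite simple graph `G`:
`t_G(f) = ∫ ∏_{{u,v} ∈ E(G)} f(x_u, x_v) dx`, with respect to Lebesgue measure on `[0,1]`. -/
def graphDensity {V : Type} [Fintype V] (G : SimpleGraph V)
    (f : unitInterval → unitInterval → ℝ) (hf : ∀ a b, f a b = f b a) : ℝ :=
  ∫ x : V → unitInterval,
    ∏ e ∈ G.edgeFinset,
      Sym2.lift ⟨fun u v => f (x u) (x v), fun u v => hf (x u) (x v)⟩ e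

/-- A finite simple graph is positive if `t_G(f) ≥ 0` for every bounded measurable
symmetric kernel `f : [0,1]² → ℝ`. -/
def GraphPositive {V : Type} [Fintype V] (G : SimpleGraph V) : Prop :=
  ∀ (f : unitInterval → unitInterval → ℝ) (hf : ∀ a b, f a b = f b a),
    Measurable (fun p : unitInterval × unitInterval => f p.1 p.2) →
    (∃ C, ∀ a b, |f a b| ≤ C) →
    0 ≤ graphDensity G f hf

end
/-- The `1`-subdivision of the complete bipartite graph `K_{r,r}`: every edge
`{left i, right j}` of `K_{r,r}` is replaced by a path of length 2 through the
new vertex `(i, j)`. -/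
def subdivisionKrr (r : ℕ) : SimpleGraph ((Fin r ⊕ Fin r) ⊕ Fin r × Fin r) :=
  SimpleGraph.fromRel (fun a b =>
    ∃ i j : Fin r, (a = Sum.inl (Sum.inl i) ∨ a = Sum.inl (Sum.inr j)) ∧ b = Sum.inr (i, j))

/-!
Write `r = 2s + 1`. If the `1`-subdivision of `K_{r,r}` is positive, then the contraction
`rowColSum M = ∑ a, ∏ i, M (a i ·) ∏ j, M (a · j)`, over `r × r` arrays `a`, is nonnegative for
every tensor `M` of order `r` that is a sum of tensor powers: if `M = ∑ u, w u ⊗ ⋯ ⊗ w u`, the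
contraction is the homomorphism sum of `K_{r,r}` in the positive semidefinite matrix `w wᵀ`, hence
that of the subdivision in its square root. For odd `r` every symmetric tensor is such a sum, by
polarization: the coefficients are absorbed as `r`-th roots, whatever their sign.

It remains to find a symmetric tensor with negative contraction. Take `N` blocks of size `2 × 2`
with distinct entries, and let `M` be `α` on the two row types and the two column types through each
block, and `1` or `-1` on the types of rows and columns avoiding the blocks. An array contributes
only if all its rows and columns have a type, and then it is of one of three kinds:
* one block in the intersection of two rows and two columns: the `r - 2` remaining rows and the
  `r - 2` remaining columns have opposite weights, which, as `r` is odd, gives `-α ^ 4`, and each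
  block occurs in such an array;
* no blocks: these arrays are bounded in number independently of `N`, and contribute at most `1`;
* all rows and columns of weight `α`: every block index then occurs in at least two rows, so there
  are at most `s` of them, and these arrays contribute `O(N ^ s α ^ (2 * r))`.

With `α` small and `N ≈ L α⁻⁴`, the last term is `O(L ^ s α ^ 2)`, and the first is `-L` or less.
-/

section EdgeProd

variable {V : Type} [Fintype V] {G : SimpleGraph V} {Ω : Type*}

/-- The integrand of the homomorphism density `t_G(f)`, for a kernel on an arbitrary type `Ω`:
the product of `f (x u) (x v)` over the edges `uv` of `G`. -/
noncomputable def edgeProd (G : SimpleGraph V) (f : Ω → Ω → ℝ) (hf : ∀ a b, f a b = f b a)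
    (x : V → Ω) : ℝ :=
  ∏ e ∈ G.edgeFinset, Sym2.lift ⟨fun u v => f (x u) (x v), fun u v => hf (x u) (x v)⟩ e

lemma measurable_edgeProd [MeasurableSpace Ω] {f : Ω → Ω → ℝ} (hf : ∀ a b, f a b = f b a)
    (hfm : Measurable fun p : Ω × Ω => f p.1 p.2) : Measurable (edgeProd G f hf) := by
  refine Finset.measurable_fun_prod _ fun e _ => ?_
  induction e with
  | _ u v => exact hfm.comp (f := fun x : V → Ω => (x u, x v)) (by fun_prop)

lemma GraphPositive.integral_edgeProd_nonneg (hG : GraphPositive G) [MeasurableSpace Ω]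
    [StandardBorelSpace Ω] (μ : Measure Ω) [IsProbabilityMeasure μ] {f : Ω → Ω → ℝ}
    (hf : ∀ a b, f a b = f b a) (hfm : Measurable fun p : Ω × Ω => f p.1 p.2)
    (hfb : ∃ C, ∀ a b, |f a b| ≤ C) :
    0 ≤ ∫ x, edgeProd G f hf x ∂Measure.pi fun _ => μ := by
  have : Nonempty Ω := nonempty_of_isProbabilityMeasure μ
  obtain ⟨φ, hφ, hφμ⟩ := μ.exists_measurable_map_eq
  have hmap : MeasurePreserving (fun (x : V → unitInterval) v => φ (x v)) volume
      (Measure.pi fun _ => μ) := measurePreserving_pi _ _ fun _ => ⟨hφ, hφμ⟩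
  rw [← hmap.map_eq, integral_map hmap.aemeasurable
    (measurable_edgeProd hf hfm).aestronglyMeasurable]
  exact hG (fun a b => f (φ a) (φ b)) (fun a b => hf _ _)
    (hfm.comp ((hφ.comp measurable_fst).prodMk (hφ.comp measurable_snd)))
    (hfb.imp fun C hC a b => hC _ _)

lemma GraphPositive.sum_edgeProd_nonneg [DecidableEq V] (hG : GraphPositive G) {U : Type*}
    [Fintype U] [Nonempty U] {f : U → U → ℝ} (hf : ∀ a b, f a b = f b a) :
    0 ≤ ∑ x : V → U, edgeProd G f hf x := by
  let _ : MeasurableSpace U := ⊤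
  have : DiscreteMeasurableSpace U := ⟨fun _ => trivial⟩
  have hbdd : ∃ C, ∀ a b, |f a b| ≤ C := by
    obtain ⟨C, hC⟩ := (Set.finite_range fun p : U × U => |f p.1 p.2|).bddAbove
    exact ⟨C, fun a b => hC ⟨(a, b), rfl⟩⟩
  have hint := hG.integral_edgeProd_nonneg (PMF.uniformOfFintype U).toMeasure hf
    (measurable_of_countable _) hbdd
  have hmass (x : V → U) : (Measure.pi fun _ => (PMF.uniformOfFintype U).toMeasure).real {x} =
      ((Fintype.card U : ℝ)⁻¹) ^ Fintype.card V := by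
    simp [measureReal_def, Measure.pi_singleton]
  rw [integral_fintype (.of_finite)] at hint
  simp only [hmass, smul_eq_mul, ← Finset.mul_sum] at hint
  exact nonneg_of_mul_nonneg_right hint (by positivity)

end EdgeProd

lemma prod_edgeFinset_subdivisionKrr {M : Type*} [CommMonoid M] (r : ℕ)
    (g : Sym2 ((Fin r ⊕ Fin r) ⊕ Fin r × Fin r) → M) :
    ∏ e ∈ (subdivisionKrr r).edgeFinset, g e =
      ∏ p : Fin r × Fin r, g s(.inl (.inl p.1), .inr p) * g s(.inl (.inr p.2), .inr p) := by
  let halfEdge : (Fin r × Fin r) × Bool → Sym2 ((Fin r ⊕ Fin r) ⊕ Fin r × Fin r) := fun q =>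
    s(.inl (if q.2 then .inl q.1.1 else .inr q.1.2), .inr q.1)
  have hinj : Function.Injective halfEdge := by
    rintro ⟨⟨i, j⟩, b⟩ ⟨⟨i', j'⟩, b'⟩ h
    cases b <;> cases b' <;> simp_all [halfEdge]
  have himage : (subdivisionKrr r).edgeFinset = Finset.univ.image halfEdge := by
    ext e
    induction e with
    | _ u v =>
      rw [SimpleGraph.mem_edgeFinset, SimpleGraph.mem_edgeSet]
      simp only [subdivisionKrr, SimpleGraph.fromRel_adj, Finset.mem_image, Finset.mem_univ,
        true_and, halfEdge]
      constructor
      · rintro ⟨-, ⟨i, j, rfl | rfl, rfl⟩ | ⟨i, j, rfl | rfl, rfl⟩⟩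
        exacts [⟨((i, j), true), by simp⟩, ⟨((i, j), false), by simp⟩,
          ⟨((i, j), true), by simp⟩, ⟨((i, j), false), by simp⟩]
      · rintro ⟨⟨⟨i, j⟩, b⟩, h⟩
        rcases Sym2.eq_iff.1 h with ⟨rfl, rfl⟩ | ⟨rfl, rfl⟩ <;> cases b <;> simp
  rw [himage, Finset.prod_image hinj.injOn, Fintype.prod_prod_type]
  simp [halfEdge]

lemma sum_edgeProd_subdivisionKrr (r : ℕ) {U : Type*} [Fintype U] (F : Matrix U U ℝ)
    (hF : ∀ a b, F a b = F b a) :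
    ∑ c, edgeProd (subdivisionKrr r) F hF c =
      ∑ x : Fin r → U, ∑ y : Fin r → U, ∏ i, ∏ j, (F * F) (x i) (y j) := by
  simp only [edgeProd, prod_edgeFinset_subdivisionKrr, Sym2.lift_mk]
  rw [← (Equiv.sumArrowEquivProdArrow _ _ U).symm.sum_comp, Fintype.sum_prod_type,
    ← (Equiv.sumArrowEquivProdArrow _ _ U).symm.sum_comp, Fintype.sum_prod_type]
  refine Finset.sum_congr rfl fun x _ => Finset.sum_congr rfl fun y _ => ?_
  rw [← Fintype.prod_prod_type' (f := fun i j => (F * F) (x i) (y j))]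
  simp_rw [Matrix.mul_apply, Fintype.prod_sum, hF _ (y _)]
  rfl

open scoped MatrixOrder in
lemma GraphPositive.sum_prod_posSemidef_nonneg {r : ℕ} (hpos : GraphPositive (subdivisionKrr r))
    {U : Type*} [Fintype U] [Nonempty U] {A : Matrix U U ℝ} (hA : A.PosSemidef) :
    0 ≤ ∑ x : Fin r → U, ∑ y : Fin r → U, ∏ i, ∏ j, A (x i) (y j) := by
  have hsymm : ∀ a b, CFC.sqrt A a b = CFC.sqrt A b a := fun a b => by
    simpa using (Matrix.nonneg_iff_posSemidef.1 (CFC.sqrt_nonneg A)).1.apply b a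
  have hsum := hpos.sum_edgeProd_nonneg hsymm
  rwa [sum_edgeProd_subdivisionKrr, CFC.sqrt_mul_sqrt_self A hA.nonneg] at hsum

section RowColSum

variable {ι S : Type*} [Fintype ι] [DecidableEq ι] [Fintype S]

/-- The contraction of copies of the tensor `M` placed at the vertices of the complete bipartite
graph `K_{ι,ι}`, one index for each edge; the indices form the array `a`. -/
def rowColSum (M : (ι → S) → ℝ) : ℝ :=
  ∑ a : ι → ι → S, (∏ i, M (a i)) * ∏ j, M fun i => a i j

lemma rowColSum_sum_prod {U : Type*} [Fintype U] (w : Matrix U S ℝ) :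
    rowColSum (fun s : ι → S => ∑ u, ∏ j, w u (s j)) =
      ∑ x : ι → U, ∑ y : ι → U, ∏ i, ∏ j, (w * w.transpose) (x i) (y j) := by
  have hterm (a : ι → ι → S) :
      (∏ i, ∑ u, ∏ j, w u (a i j)) * (∏ j, ∑ u, ∏ i, w u (a i j)) =
        ∑ x : ι → U, ∑ y : ι → U, ∏ i, ∏ j, w (x i) (a i j) * w (y j) (a i j) := by
    rw [Fintype.prod_sum, Fintype.prod_sum, Finset.sum_mul_sum]
    refine Finset.sum_congr rfl fun x _ => Finset.sum_congr rfl fun y _ => ?_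
    simp_rw [Finset.prod_mul_distrib]
    rw [Finset.prod_comm (f := fun i j => w (y j) (a i j))]
  simp_rw [rowColSum, hterm, Matrix.mul_apply, Matrix.transpose_apply, Fintype.prod_sum]
  rw [Finset.sum_comm]
  exact Finset.sum_congr rfl fun x _ => Finset.sum_comm

end RowColSum

lemma GraphPositive.rowColSum_sum_prod_nonneg {r : ℕ} (hpos : GraphPositive (subdivisionKrr r))
    {U S : Type*} [Fintype U] [Nonempty U] [Fintype S] (w : Matrix U S ℝ) :
    0 ≤ rowColSum fun s : Fin r → S => ∑ u, ∏ j, w u (s j) := by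
  rw [rowColSum_sum_prod]
  exact hpos.sum_prod_posSemidef_nonneg (by
    simpa using Matrix.posSemidef_self_mul_conjTranspose w)

lemma exists_pow_eq_of_odd {n : ℕ} (hn : Odd n) (c : ℝ) : ∃ x : ℝ, x ^ n = c := by
  rcases le_total 0 c with hc | hc
  · exact ⟨c ^ (n : ℝ)⁻¹, Real.rpow_inv_natCast_pow hc hn.pos.ne'⟩
  · refine ⟨-(-c) ^ (n : ℝ)⁻¹, ?_⟩
    rw [hn.neg_pow, Real.rpow_inv_natCast_pow (neg_nonneg.2 hc) hn.pos.ne', neg_neg]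

section SymmetricTensor

variable {ι : Type*} [Fintype ι] [DecidableEq ι]

lemma sum_prod_sign_mul_prod_sign_comp (h : ι → ι) [Decidable h.Bijective] :
    ∑ ε : ι → ℤˣ, (((∏ i, ε i) * ∏ j, ε (h j) : ℤˣ) : ℤ) =
      if h.Bijective then 2 ^ Fintype.card ι else 0 := by
  split_ifs with hh
  · simp [hh.prod_comp, Int.units_mul_self]
  · obtain ⟨i₀, hi₀⟩ : ∃ i₀, ∀ j, h j ≠ i₀ := by
      simpa [Function.Surjective] using mt Finite.surjective_iff_bijective.1 hh
    have hflip (ε : ι → ℤˣ) :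
        (∏ i, (ε * Pi.mulSingle i₀ (-1) : ι → ℤˣ) i) *
            ∏ j, (ε * Pi.mulSingle i₀ (-1) : ι → ℤˣ) (h j) =
          -((∏ i, ε i) * ∏ j, ε (h j)) := by
      simp [Finset.prod_mul_distrib, Pi.mulSingle_eq_of_ne (hi₀ _)]
    have hneg := Equiv.sum_comp (Equiv.mulRight (Pi.mulSingle i₀ (-1) : ι → ℤˣ))
      fun ε : ι → ℤˣ => (((∏ i, ε i) * ∏ j, ε (h j) : ℤˣ) : ℤ)
    simp only [Equiv.coe_mulRight, hflip, Units.val_neg, Finset.sum_neg_distrib] at hneg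
    exact neg_eq_self.1 hneg

/-- Glynn's formula. -/
lemma two_pow_mul_permanent {R : Type*} [CommRing R] (A : Matrix ι ι R) :
    2 ^ Fintype.card ι * A.permanent =
      ∑ ε : ι → ℤˣ, (((∏ i, ε i : ℤˣ) : ℤ) : R) * ∏ j, ∑ i, ((ε i : ℤ) : R) * A i j := by
  classical
  have hperm : A.permanent = ∑ h : ι → ι with h.Bijective, ∏ j, A (h j) j :=
    Finset.sum_bij (fun σ _ => σ) (fun σ _ => by simp)
      (fun _ _ _ _ h => DFunLike.coe_injective h)
      (fun h hh => ⟨.ofBijective h (Finset.mem_filter.1 hh).2, by simp, rfl⟩) fun _ _ => rfl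
  calc 2 ^ Fintype.card ι * A.permanent
      = ∑ h : ι → ι, (((if h.Bijective then 2 ^ Fintype.card ι else 0 : ℤ)) : R) *
          ∏ j, A (h j) j := by
        simp [hperm, Finset.mul_sum, Finset.sum_filter]
    _ = ∑ h : ι → ι, ∑ ε : ι → ℤˣ,
          (((∏ i, ε i : ℤˣ) : ℤ) : R) * ∏ j, ((ε (h j) : ℤ) : R) * A (h j) j := by
        simp_rw [← sum_prod_sign_mul_prod_sign_comp, Int.cast_sum, Finset.sum_mul,
          Finset.prod_mul_distrib, ← mul_assoc]
        simp
    _ = _ := by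
        rw [Finset.sum_comm]
        simp_rw [Fintype.prod_sum, Finset.mul_sum]

variable {S : Type*} [Fintype S]

lemma factorial_mul_eq_sum_mul_permanent [DecidableEq S] {R : Type*} [CommRing R] {M : (ι → S) → R}
    (hM : ∀ (σ : Equiv.Perm ι) s, M (s ∘ σ) = M s) (s : ι → S) :
    (Fintype.card ι).factorial * M s =
      ∑ t, M t * (Matrix.of fun i j => if t i = s j then (1 : R) else 0).permanent := by
  have hperm (σ : Equiv.Perm ι) :
      ∑ t : ι → S, M t * ∏ i, (Matrix.of fun i j => if t i = s j then (1 : R) else 0) (σ i) i =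
        M s := by
    have : ∀ t : ι → S, (∀ i, t (σ i) = s i) ↔ t = s ∘ σ.symm := fun t => by
      rw [Equiv.eq_comp_symm, funext_iff]; rfl
    simp [Finset.prod_ite_zero, this, hM]
  simp_rw [Matrix.permanent, Finset.mul_sum]
  rw [Finset.sum_comm, Finset.sum_congr rfl fun σ _ => hperm σ]
  simp [Fintype.card_perm]

lemma exists_eq_sum_prod_of_odd (hodd : Odd (Fintype.card ι)) {M : (ι → S) → ℝ}
    (hM : ∀ (σ : Equiv.Perm ι) s, M (s ∘ σ) = M s) :
    ∃ w : Matrix ((ι → S) × (ι → ℤˣ)) S ℝ, M = fun s => ∑ u, ∏ j, w u (s j) := by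
  classical
  choose l hl using fun t => exists_pow_eq_of_odd hodd
    (M t / ((Fintype.card ι).factorial * 2 ^ Fintype.card ι))
  have hsign (u : ℤˣ) : ((u : ℤ) : ℝ) ^ Fintype.card ι = u := by
    rcases Int.units_eq_one_or u with rfl | rfl <;> simp [hodd.neg_one_pow]
  refine ⟨fun u x => l u.1 * ((∏ i, u.2 i : ℤˣ) : ℤ) *
    ∑ i, ((u.2 i : ℤ) : ℝ) * if u.1 i = x then 1 else 0, funext fun s => ?_⟩
  have hglynn (t : ι → S) :=
    two_pow_mul_permanent (Matrix.of fun i j => if t i = s j then (1 : ℝ) else 0)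
  calc M s = ∑ t, M t / ((Fintype.card ι).factorial * 2 ^ Fintype.card ι) *
        (2 ^ Fintype.card ι *
          (Matrix.of fun i j => if t i = s j then (1 : ℝ) else 0).permanent) := by
        rw [← mul_right_inj' (Nat.cast_ne_zero.2 (Fintype.card ι).factorial_ne_zero),
          factorial_mul_eq_sum_mul_permanent hM, Finset.mul_sum]
        refine Finset.sum_congr rfl fun t _ => ?_
        field_simp
    _ = _ := by
        rw [Fintype.sum_prod_type]
        refine Finset.sum_congr rfl fun t _ => ?_
        simp only [hglynn, Finset.mul_sum (Finset.univ : Finset (ι → ℤˣ)), Matrix.of_apply,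
          Finset.prod_mul_distrib, Finset.prod_const, Finset.card_univ, hl, hsign, mul_assoc]

end SymmetricTensor

lemma GraphPositive.rowColSum_nonneg {r : ℕ} (hpos : GraphPositive (subdivisionKrr r))
    (hodd : Odd r) {S : Type*} [Fintype S] [Nonempty S] {M : (Fin r → S) → ℝ}
    (hM : ∀ (σ : Equiv.Perm (Fin r)) s, M (s ∘ σ) = M s) : 0 ≤ rowColSum M := by
  obtain ⟨w, rfl⟩ := exists_eq_sum_prod_of_odd (by simpa using hodd) hM
  exact hpos.rowColSum_sum_prod_nonneg w

/-- The index set of the symmetric tensor `lineTensor`. Each `k : K` contributes the four entries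
`block b c k` of a `2 × 2` block; the symbol `edge false b` (resp. `edge true c`) fills the rest of
a row (resp. column) of a block, and `blank` is used away from the blocks. -/
inductive GridSymbol (K : Type*)
  | block (b c : Bool) (k : K)
  | edge (o b : Bool)
  | blank
  deriving Fintype

/-- The map on symbols induced by a map of block indices. -/
def GridSymbol.map {K L : Type*} (f : K → L) : GridSymbol K → GridSymbol L
  | block b c k => block b c (f k)
  | edge o b => edge o b
  | blank => blank

/-- The types of words on which `lineTensor` does not vanish: `side false b k` (resp.
`side true b k`) is the type of a row (resp. column) through the block `k`, and `border o` that of a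
line which crosses two lines `side o _ _` and avoids all blocks. -/
inductive GridLine (K : Type*)
  | side (o b : Bool) (k : K)
  | border (o : Bool)

namespace GridLine

variable {K : Type*}

/-- The symbols of a line of a given type: `some c` for the two distinguished positions, which occur
once each, and `none` for all other positions. -/
def entry : GridLine K → Option Bool → GridSymbol K
  | side false b k, some c => .block b c k
  | side true b k, some c => .block c b k
  | side o b _, none => .edge o b
  | border o, some b => .edge o b
  | border _, none => .blank

lemma map_border_entry {L : Type*} (f : K → L) (o : Bool) (x : Option Bool) :
    ((border o).entry x).map f = (border o).entry x := by
  cases x <;> rfl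

lemma map_side_entry {L : Type*} (f : K → L) (o b : Bool) (k : K) (x : Option Bool) :
    ((side o b k).entry x).map f = (side o b (f k)).entry x := by
  cases x <;> cases o <;> rfl

lemma eq_border_or_eq_side (τ : GridLine K) :
    (∃ o, τ = border o) ∨ ∃ o b k, τ = side o b k := by
  cases τ <;> simp

lemma eq_of_border_entry_eq_side_entry {o o' b : Bool} {k : K} {x y : Option Bool}
    (h : (border o).entry x = (side o' b k).entry y) : o = o' ∧ x = some b := by
  cases x <;> cases y <;> cases o' <;> simp_all [entry]

lemma exists_eq_side_of_side_entry_eq {o b c : Bool} {k : K} {τ : GridLine K} {y : Option Bool}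
    (h : (side o b k).entry (some c) = τ.entry y) : ∃ o' b' c', τ = side o' b' k ∧ y = some c' := by
  rcases τ with ⟨_ | _, _, _⟩ | _ <;> cases o <;> cases y <;> simp_all [entry]

lemma eq_of_side_entry_eq_side_entry {o b b' : Bool} {k k' : K} {x y : Option Bool}
    (h : (side o b k).entry x = (side o b' k').entry y) : b = b' := by
  cases x <;> cases y <;> cases o <;> simp_all [entry]

/-- The types of the rows (`o = false`) and columns (`o = true`) of an array with the block `k`
in its corner. -/
def corner (o : Bool) (k : K) : Option Bool → GridLine K
  | some b => side o b k
  | none => border !o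

lemma corner_entry_not (o : Bool) (k : K) (x y : Option Bool) :
    (corner (!o) k y).entry x = (corner o k x).entry y := by
  cases o <;> cases x <;> cases y <;> rfl

/-- The values of `lineTensor`. The two kinds of border have opposite signs so that the arrays with
a block in their corner contribute negatively when the number of rows is odd. -/
def weight (α : ℝ) : GridLine K → ℝ
  | side _ _ _ => α
  | border false => 1
  | border true => -1

end GridLine

section Marking

variable {ι : Type*}

/-- A labelling of one position by `some false`, one other position by `some true`, and all
remaining positions by `none`. -/
def IsMarking (p : ι → Option Bool) : Prop :=
  ∀ b, ∃! i, p i = some b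

lemma IsMarking.comp_equiv {p : ι → Option Bool} (hp : IsMarking p) (σ : Equiv.Perm ι) :
    IsMarking (p ∘ σ) :=
  fun b => (σ.existsUnique_congr_right).2 (hp b)

lemma IsMarking.exists_eq_some_of_ne {p : ι → Option Bool} (hp : IsMarking p) (i : ι) :
    ∃ i' ≠ i, ∃ b, p i' = some b := by
  obtain ⟨i₀, hi₀, -⟩ := hp false
  obtain ⟨i₁, hi₁, -⟩ := hp true
  by_cases h : i₀ = i
  · exact ⟨i₁, by rintro rfl; simp_all, true, hi₁⟩
  · exact ⟨i₀, h, false, hi₀⟩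

variable [Fintype ι]

lemma exists_isMarking (hι : 1 < Fintype.card ι) : ∃ p : ι → Option Bool, IsMarking p := by
  classical
  obtain ⟨i₀, i₁, hne⟩ := Fintype.exists_pair_of_one_lt_card hι
  refine ⟨fun i => if i = i₀ then some false else if i = i₁ then some true else none, ?_⟩
  rintro (_ | _)
  · exact ⟨i₀, by simp, fun i hi => by grind⟩
  · exact ⟨i₁, by simp [hne.symm], fun i hi => by grind⟩

lemma IsMarking.card_filter_ne_none {p : ι → Option Bool} (hp : IsMarking p) :
    Finset.card {i | p i ≠ none} = 2 := by
  classical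
  choose i hi huniq using hp
  have hne : i false ≠ i true := fun h => by simpa [h, hi] using hi false
  rw [← Finset.card_pair hne]
  congr 1
  ext j
  cases hj : p j with
  | none => grind
  | some b => cases b <;> grind

lemma IsMarking.exists_eq_none {p : ι → Option Bool} (hp : IsMarking p)
    (hι : 2 < Fintype.card ι) : ∃ i, p i = none := by
  by_contra! h
  have := hp.card_filter_ne_none
  simp [h] at this
  omega

end Marking

section Lines

variable {ι K : Type*}

/-- `s` is a word of type `τ`. -/
def GridLine.IsLine (τ : GridLine K) (s : ι → GridSymbol K) : Prop :=
  ∃ p, IsMarking p ∧ s = τ.entry ∘ p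

lemma GridLine.IsLine.comp_equiv {τ : GridLine K} {s : ι → GridSymbol K} (h : τ.IsLine s)
    (σ : Equiv.Perm ι) : τ.IsLine (s ∘ σ) := by
  obtain ⟨p, hp, rfl⟩ := h
  exact ⟨p ∘ σ, hp.comp_equiv σ, rfl⟩

lemma GridLine.isLine_comp_equiv {τ : GridLine K} {s : ι → GridSymbol K} (σ : Equiv.Perm ι) :
    τ.IsLine (s ∘ σ) ↔ τ.IsLine s :=
  ⟨fun h => by simpa [Function.comp_assoc] using h.comp_equiv σ.symm, fun h => h.comp_equiv σ⟩

lemma GridLine.IsLine.unique [Fintype ι] (hι : 2 < Fintype.card ι) {τ τ' : GridLine K}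
    {s : ι → GridSymbol K} (h : τ.IsLine s) (h' : τ'.IsLine s) : τ = τ' := by
  obtain ⟨p, hp, rfl⟩ := h
  obtain ⟨p', hp', heq⟩ := h'
  obtain ⟨i, hi, -⟩ := hp false
  obtain ⟨j, hj⟩ := hp.exists_eq_none hι
  have hei := congrFun heq i
  have hej := congrFun heq j
  obtain ⟨i', hi', -⟩ := hp' false
  have hei' := congrFun heq i'
  simp only [Function.comp_apply, hi, hj, hi'] at hei hej hei'
  rcases τ with ⟨_ | _, b, k⟩ | o <;> rcases τ' with ⟨_ | _, b', k'⟩ | o' <;>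
    cases hpi : p' i <;> cases hpj : p' j <;> cases hpi' : p i' <;>
    simp_all [GridLine.entry]

/-- The symmetric tensor refuting positivity; it takes the value `τ.weight α` on the words of
type `τ`. -/
noncomputable def lineTensor (α : ℝ) (s : ι → GridSymbol K) : ℝ :=
  if h : ∃ τ : GridLine K, τ.IsLine s then h.choose.weight α else 0

lemma lineTensor_comp_equiv (α : ℝ) (σ : Equiv.Perm ι) (s : ι → GridSymbol K) :
    lineTensor α (s ∘ σ) = lineTensor α s := by
  simp only [lineTensor, GridLine.isLine_comp_equiv]

lemma GridLine.IsLine.lineTensor_eq [Fintype ι] (hι : 2 < Fintype.card ι) (α : ℝ)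
    {τ : GridLine K} {s : ι → GridSymbol K} (h : τ.IsLine s) : lineTensor α s = τ.weight α := by
  have hex : ∃ τ : GridLine K, τ.IsLine s := ⟨τ, h⟩
  rw [lineTensor, dif_pos hex, hex.choose_spec.unique hι h]

lemma exists_isLine_of_lineTensor_ne_zero {α : ℝ} {s : ι → GridSymbol K}
    (h : lineTensor α s ≠ 0) : ∃ τ : GridLine K, τ.IsLine s :=
  of_not_not fun hex => h (dif_neg hex)

end Lines

section LineArray

variable {ι K : Type*} {ρ κ : ι → GridLine K} {a : ι → ι → GridSymbol K}

/-- The rows and columns of the array `a` are words of types `ρ` and `κ` respectively. -/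
structure IsLineArray (ρ κ : ι → GridLine K) (a : ι → ι → GridSymbol K) : Prop where
  row (i : ι) : (ρ i).IsLine (a i)
  col (j : ι) : (κ j).IsLine fun i => a i j

/-- The types of parallel lines two of which are sides, the others being borders; they are placed
as the rows (`o = false`) or columns (`o = true`) of an array with one block in its corner. -/
def IsTwoSided (o : Bool) (ρ : ι → GridLine K) : Prop :=
  ∃ p, IsMarking p ∧ ∀ i, ∃ k, ρ i = .corner o k (p i)

namespace IsLineArray

lemma transpose (ha : IsLineArray ρ κ a) : IsLineArray κ ρ fun j i => a i j :=
  ⟨ha.col, ha.row⟩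

lemma exists_entry_eq_entry (ha : IsLineArray ρ κ a) (i j : ι) :
    ∃ x y, (ρ i).entry x = (κ j).entry y := by
  obtain ⟨p, -, hp⟩ := ha.row i
  obtain ⟨q, -, hq⟩ := ha.col j
  exact ⟨p j, q i, (congrFun hp j).symm.trans (congrFun hq i)⟩

lemma exists_ne_col_eq_side (ha : IsLineArray ρ κ a) {i : ι} {o b : Bool} {k : K}
    (hi : ρ i = .side o b k) (j : ι) : ∃ j' ≠ j, ∃ o' b', κ j' = .side o' b' k := by
  obtain ⟨p, hp, hrow⟩ := ha.row i
  obtain ⟨j', hne, c, hc⟩ := hp.exists_eq_some_of_ne j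
  obtain ⟨q, -, hcol⟩ := ha.col j'
  have hcross : (ρ i).entry (p j') = (κ j').entry (q i) :=
    (congrFun hrow j').symm.trans (congrFun hcol i)
  rw [hi, hc] at hcross
  obtain ⟨o', b', -, hκ, -⟩ := GridLine.exists_eq_side_of_side_entry_eq hcross
  exact ⟨j', hne, o', b', hκ⟩

lemma exists_ne_row_eq_side (ha : IsLineArray ρ κ a) {i : ι} {o b : Bool} {k : K}
    (hi : ρ i = .side o b k) : ∃ i' ≠ i, ∃ o' b', ρ i' = .side o' b' k := by
  obtain ⟨j, -, o', b', hj⟩ := ha.exists_ne_col_eq_side hi i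
  exact ha.transpose.exists_ne_col_eq_side hj i

lemma eq_of_border_of_side (ha : IsLineArray ρ κ a) {i j : ι} {o o' b : Bool} {k : K}
    (hi : ρ i = .border o) (hj : κ j = .side o' b k) : o = o' := by
  obtain ⟨x, y, h⟩ := ha.exists_entry_eq_entry i j
  rw [hi, hj] at h
  exact (GridLine.eq_of_border_entry_eq_side_entry h).1

lemma exists_isMarking_of_border_of_side (ha : IsLineArray ρ κ a) {i₀ i₁ : ι} {o o₁ b₁ : Bool}
    {k₁ : K} (h₀ : ρ i₀ = .border o) (h₁ : ρ i₁ = .side o₁ b₁ k₁) :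
    ∃ p, IsMarking p ∧ (∀ j b, p j = some b → ∃ k, κ j = .side o b k) ∧
      ∀ j, p j = none → ∃ o', κ j = .border o' := by
  obtain ⟨p, hp, hrow⟩ := ha.row i₀
  have hside {j o' b k} (hj : κ j = .side o' b k) : p j = some b := by
    obtain ⟨q, -, hcol⟩ := ha.col j
    have hcross : (ρ i₀).entry (p j) = (κ j).entry (q i₀) :=
      (congrFun hrow j).symm.trans (congrFun hcol i₀)
    rw [h₀, hj] at hcross
    exact (GridLine.eq_of_border_entry_eq_side_entry hcross).2
  refine ⟨p, hp, fun j b hj => ?_, fun j hj => ?_⟩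
  · obtain ⟨j₁, -, o', b', hj₁⟩ := ha.exists_ne_col_eq_side h₁ j
    obtain ⟨j₂, hne, o'', b'', hj₂⟩ := ha.exists_ne_col_eq_side h₁ j₁
    obtain rfl := ha.eq_of_border_of_side h₀ hj₁
    obtain rfl := ha.eq_of_border_of_side h₀ hj₂
    have hbb : b' ≠ b'' := by
      rintro rfl
      exact hne ((hp b').unique (hside hj₂) (hside hj₁))
    obtain rfl | rfl : b = b' ∨ b = b'' := by
      cases b <;> cases b' <;> cases b'' <;> simp_all
    · exact (hp b).unique hj (hside hj₁) ▸ ⟨k₁, hj₁⟩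
    · exact (hp b).unique hj (hside hj₂) ▸ ⟨k₁, hj₂⟩
  · cases hκ : κ j with
    | border o' => exact ⟨o', rfl⟩
    | side o' b k => simp [hside hκ] at hj

variable [Fintype ι]

lemma isTwoSided_of_border_of_side (hι : 2 < Fintype.card ι) (ha : IsLineArray ρ κ a)
    {i₀ i₁ : ι} {o o₁ b₁ : Bool} {k₁ : K} (h₀ : ρ i₀ = .border o) (h₁ : ρ i₁ = .side o₁ b₁ k₁) :
    ∃ o, IsTwoSided o ρ ∧ IsTwoSided (!o) κ := by
  obtain ⟨q, hq, hκside, hκborder⟩ := ha.exists_isMarking_of_border_of_side h₀ h₁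
  obtain ⟨j₀, hj₀⟩ := hq.exists_eq_none hι
  obtain ⟨o', hj₀⟩ := hκborder j₀ hj₀
  obtain ⟨j₁, hj₁, -⟩ := hq true
  obtain ⟨k, hj₁⟩ := hκside j₁ true hj₁
  obtain ⟨p, hp, hρside, hρborder⟩ := ha.transpose.exists_isMarking_of_border_of_side hj₀ hj₁
  obtain ⟨i₂, hi₂, -⟩ := hp false
  obtain ⟨k', hi₂⟩ := hρside i₂ false hi₂
  have hne : o ≠ o' := by
    rintro rfl
    obtain ⟨x, y, h⟩ := ha.exists_entry_eq_entry i₂ j₁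
    rw [hi₂, hj₁] at h
    exact Bool.false_ne_true (GridLine.eq_of_side_entry_eq_side_entry h)
  obtain rfl : o = !o' := Bool.eq_not_of_ne hne
  refine ⟨o', ⟨p, hp, fun i => ?_⟩, ⟨q, hq, fun j => ?_⟩⟩
  · cases hi : p i with
    | some b => exact hρside i b hi
    | none =>
      obtain ⟨o, ho⟩ := hρborder i hi
      exact ⟨k, by rw [ho, ha.eq_of_border_of_side ho hj₁, GridLine.corner]⟩
  · cases hj : q j with
    | some b => exact hκside j b hj
    | none =>
      obtain ⟨o, ho⟩ := hκborder j hj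
      refine ⟨k, ?_⟩
      rw [ho, ha.transpose.eq_of_border_of_side ho hi₂, GridLine.corner, Bool.not_not]

lemma trichotomy (hι : 2 < Fintype.card ι) (ha : IsLineArray ρ κ a) :
    ((∀ i, ∃ o, ρ i = .border o) ∧ ∀ j, ∃ o, κ j = .border o) ∨
      ((∀ i, ∃ o b k, ρ i = .side o b k) ∧ ∀ j, ∃ o b k, κ j = .side o b k) ∨
      ∃ o, IsTwoSided o ρ ∧ IsTwoSided (!o) κ := by
  by_cases hside : ∃ i o b k, ρ i = .side o b k
  · obtain ⟨i, o, b, k, hi⟩ := hside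
    obtain ⟨j, -, o', b', hj⟩ := ha.exists_ne_col_eq_side hi i
    by_cases hρ : ∃ i o, ρ i = .border o
    · obtain ⟨i₀, o₀, hi₀⟩ := hρ
      exact .inr (.inr (ha.isTwoSided_of_border_of_side hι hi₀ hi))
    by_cases hκ : ∃ j o, κ j = .border o
    · obtain ⟨j₀, o₀, hj₀⟩ := hκ
      obtain ⟨o, hκ, hρ⟩ := ha.transpose.isTwoSided_of_border_of_side hι hj₀ hj
      exact .inr (.inr ⟨!o, hρ, by rwa [Bool.not_not]⟩)
    exact .inr (.inl ⟨fun i => (ρ i).eq_border_or_eq_side.resolve_left fun h => hρ ⟨i, h⟩,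
      fun j => (κ j).eq_border_or_eq_side.resolve_left fun h => hκ ⟨j, h⟩⟩)
  · have hside' : ¬∃ j o b k, κ j = .side o b k := by
      rintro ⟨j, o, b, k, hj⟩
      obtain ⟨i, -, hi⟩ := ha.transpose.exists_ne_col_eq_side hj j
      exact hside ⟨i, hi.imp fun o => .imp fun b h => ⟨k, h⟩⟩
    exact .inl ⟨fun i => (ρ i).eq_border_or_eq_side.resolve_right fun h => hside ⟨i, h⟩,
      fun j => (κ j).eq_border_or_eq_side.resolve_right fun h => hside' ⟨j, h⟩⟩

end IsLineArray

section Weight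

variable [Fintype ι]

lemma IsTwoSided.prod_weight {o : Bool} (h : IsTwoSided o ρ) (α : ℝ) :
    ∏ i, (ρ i).weight α =
      α ^ 2 * (GridLine.border (K := K) !o).weight α ^ (Fintype.card ι - 2) := by
  obtain ⟨p, hp, hρ⟩ := h
  have hterm (i : ι) :
      (ρ i).weight α = if p i ≠ none then α else (GridLine.border (K := K) !o).weight α := by
    obtain ⟨k, hk⟩ := hρ i
    rw [hk]
    cases p i <;> rfl
  have hcard : Finset.card {i | ¬p i ≠ none} = Fintype.card ι - 2 := by
    rw [← hp.card_filter_ne_none, ← Finset.card_univ]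
    exact Nat.eq_sub_of_add_eq' (Finset.card_filter_add_card_filter_not _)
  simp_rw [hterm]
  rw [Finset.prod_ite, Finset.prod_const, Finset.prod_const, hp.card_filter_ne_none, hcard]

lemma IsLineArray.prod_lineTensor_mul_prod_lineTensor (hι : 2 < Fintype.card ι)
    (ha : IsLineArray ρ κ a) (α : ℝ) :
    (∏ i, lineTensor α (a i)) * ∏ j, lineTensor α (fun i => a i j) =
      (∏ i, (ρ i).weight α) * ∏ j, (κ j).weight α := by
  simp only [(ha.row _).lineTensor_eq hι, (ha.col _).lineTensor_eq hι]

lemma exists_isLineArray_of_prod_lineTensor_ne_zero {α : ℝ}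
    (h : (∏ i, lineTensor α (a i)) * ∏ j, lineTensor α (fun i => a i j) ≠ 0) :
    ∃ ρ κ, IsLineArray ρ κ a := by
  obtain ⟨hrow, hcol⟩ := mul_ne_zero_iff.1 h
  choose ρ hρ using fun i =>
    exists_isLine_of_lineTensor_ne_zero (Finset.prod_ne_zero_iff.1 hrow i (Finset.mem_univ i))
  choose κ hκ using fun j =>
    exists_isLine_of_lineTensor_ne_zero (Finset.prod_ne_zero_iff.1 hcol j (Finset.mem_univ j))
  exact ⟨ρ, κ, hρ, hκ⟩

lemma IsTwoSided.prod_weight_mul_prod_weight (hι : 2 < Fintype.card ι)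
    (hodd : Odd (Fintype.card ι)) {o : Bool} (hρ : IsTwoSided o ρ) (hκ : IsTwoSided (!o) κ)
    (α : ℝ) : (∏ i, (ρ i).weight α) * ∏ j, (κ j).weight α = -α ^ 4 := by
  have hborder :
      (GridLine.border (K := K) !o).weight α * (GridLine.border (K := K) o).weight α = -1 := by
    cases o <;> simp [GridLine.weight]
  have hodd' : Odd (Fintype.card ι - 2) := Nat.Odd.sub_even hι.le hodd even_two
  rw [hρ.prod_weight, hκ.prod_weight, mul_mul_mul_comm, ← mul_pow (GridLine.weight _ _),
    Bool.not_not, hborder, hodd'.neg_one_pow]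
  ring

end Weight

end LineArray

section Counting

variable {ι K : Type*} [Fintype ι]

lemma exists_eq_comp_of_exists_ne [Nonempty ι] {s : ℕ} (hs : Fintype.card ι < 2 * (s + 1))
    {k : ι → K} (hk : ∀ i, ∃ i' ≠ i, k i' = k i) :
    ∃ (f : ι → Fin s) (g : Fin s → K), k = g ∘ f := by
  classical
  have hfiber : ∀ x ∈ Finset.univ.image k, 2 ≤ Finset.card {i | k i = x} := by
    simp only [Finset.mem_image, Finset.mem_univ, true_and, forall_exists_index,
      forall_apply_eq_imp_iff]
    intro i
    obtain ⟨i', hne, hi'⟩ := hk i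
    exact Finset.one_lt_card.2 ⟨i', by simpa, i, by simp, hne⟩
  have hrange : (Finset.univ.image k).card ≤ s := by
    have := Finset.mul_card_image_le_card Finset.univ 2 hfiber
    rw [Finset.card_univ] at this
    omega
  obtain ⟨e⟩ := Function.Embedding.nonempty_of_card_le (α := Finset.univ.image k) (β := Fin s)
    (by simpa only [Fintype.card_coe, Fintype.card_fin] using hrange)
  refine ⟨fun i => e ⟨k i, by simp⟩,
    Function.extend e Subtype.val fun _ => k (Classical.arbitrary ι), ?_⟩
  ext i
  simp [e.injective.extend_apply]

lemma card_filter_exists_ne_le [DecidableEq ι] [Nonempty ι] [Fintype K] {s : ℕ}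
    (hs : Fintype.card ι < 2 * (s + 1)) :
    Finset.card {k : ι → K | ∀ i, ∃ i' ≠ i, k i' = k i} ≤
      s ^ Fintype.card ι * Fintype.card K ^ s := by
  calc Finset.card {k : ι → K | ∀ i, ∃ i' ≠ i, k i' = k i}
      ≤ (Finset.univ.image fun p : (ι → Fin s) × (Fin s → K) => p.2 ∘ p.1).card := by
        refine Finset.card_le_card fun k hk => ?_
        obtain ⟨f, g, rfl⟩ := exists_eq_comp_of_exists_ne hs (Finset.mem_filter.1 hk).2
        exact Finset.mem_image_of_mem _ (Finset.mem_univ (f, g))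
    _ ≤ _ := Finset.card_image_le.trans_eq (by simp)

end Counting

section Arrays

variable {ι K : Type*} {ρ κ : ι → GridLine K} {a : ι → ι → GridSymbol K}

/-- The array with the block `k` at the positions marked by `p`. -/
def cornerArray (p : ι → Option Bool) (k : K) : ι → ι → GridSymbol K :=
  fun i j => (GridLine.corner false k (p i)).entry (p j)

lemma isLineArray_cornerArray {p : ι → Option Bool} (hp : IsMarking p) (k : K) :
    IsLineArray (fun i => .corner false k (p i)) (fun j => .corner true k (p j))
      (cornerArray p k) :=
  ⟨fun _ => ⟨p, hp, rfl⟩,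
    fun _ => ⟨p, hp, funext fun _ => (GridLine.corner_entry_not false k _ _).symm⟩⟩

lemma cornerArray_injective {p : ι → Option Bool} (hp : IsMarking p) :
    Function.Injective (cornerArray (K := K) p) := fun k k' h => by
  obtain ⟨i, hi, -⟩ := hp false
  simpa [cornerArray, hi, GridLine.corner, GridLine.entry] using congrFun (congrFun h i) i

variable [Fintype ι]

lemma prod_lineTensor_cornerArray (hι : 2 < Fintype.card ι) (hodd : Odd (Fintype.card ι))
    {p : ι → Option Bool} (hp : IsMarking p) (α : ℝ) (k : K) :
    (∏ i, lineTensor α (cornerArray p k i)) * ∏ j, lineTensor α (fun i => cornerArray p k i j) =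
      -α ^ 4 := by
  rw [(isLineArray_cornerArray hp k).prod_lineTensor_mul_prod_lineTensor hι]
  exact IsTwoSided.prod_weight_mul_prod_weight hι hodd (o := false)
    ⟨p, hp, fun _ => ⟨k, rfl⟩⟩ ⟨p, hp, fun _ => ⟨k, rfl⟩⟩ α

lemma prod_weight_mul_prod_weight_le_one (hρ : ∀ i, ∃ o, ρ i = .border o)
    (hκ : ∀ j, ∃ o, κ j = .border o) (α : ℝ) :
    (∏ i, (ρ i).weight α) * ∏ j, (κ j).weight α ≤ 1 := by
  have habs (o : Bool) : |(GridLine.border (K := K) o).weight α| = 1 := by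
    cases o <;> simp [GridLine.weight]
  choose o ho using hρ
  choose o' ho' using hκ
  refine (le_abs_self _).trans_eq ?_
  simp [abs_mul, Finset.abs_prod, ho, ho', habs]

variable [DecidableEq ι]

variable (ι K) in
/-- The arrays without blocks. -/
noncomputable def blockFreeArrays : Finset (ι → ι → GridSymbol K) :=
  Finset.univ.image fun (x : ι → ι → GridSymbol Empty) i j => (x i j).map Empty.elim

lemma card_blockFreeArrays_le :
    (blockFreeArrays ι K).card ≤ Fintype.card (ι → ι → GridSymbol Empty) :=
  Finset.card_image_le

lemma IsLineArray.mem_blockFreeArrays (ha : IsLineArray ρ κ a) (hρ : ∀ i, ∃ o, ρ i = .border o) :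
    a ∈ blockFreeArrays ι K := by
  choose o ho using hρ
  choose p hrow using fun i => (ha.row i).imp fun _ => And.right
  refine Finset.mem_image.2 ⟨fun i j => (GridLine.border (o i)).entry (p i j),
    Finset.mem_univ _, ?_⟩
  ext i j : 2
  rw [hrow, ho, Function.comp_apply]
  exact GridLine.map_border_entry _ _ _

variable [Fintype K]

variable (ι K) in
/-- The arrays whose block indices are constant in every row, each occurring in at least two
rows. -/
noncomputable def sideArrays : Finset (ι → ι → GridSymbol K) :=
  (Finset.univ ×ˢ Finset.univ.filter fun k : ι → K => ∀ i, ∃ i' ≠ i, k i' = k i).image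
    fun (p : (ι → ι → GridSymbol Unit) × (ι → K)) i j => (p.1 i j).map fun _ => p.2 i

lemma card_sideArrays_le [Nonempty ι] {s : ℕ} (hs : Fintype.card ι < 2 * (s + 1)) :
    (sideArrays ι K).card ≤
      Fintype.card (ι → ι → GridSymbol Unit) * (s ^ Fintype.card ι * Fintype.card K ^ s) := by
  refine Finset.card_image_le.trans ?_
  rw [Finset.card_product, Finset.card_univ]
  gcongr
  exact card_filter_exists_ne_le hs

lemma IsLineArray.mem_sideArrays (ha : IsLineArray ρ κ a) (hρ : ∀ i, ∃ o b k, ρ i = .side o b k) :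
    a ∈ sideArrays ι K := by
  choose o b k hρ using hρ
  choose p hrow using fun i => (ha.row i).imp fun _ => And.right
  have hk (i : ι) : ∃ i' ≠ i, k i' = k i := by
    obtain ⟨i', hne, o', b', hi'⟩ := ha.exists_ne_row_eq_side (hρ i)
    rw [hρ] at hi'
    exact ⟨i', hne, (GridLine.side.inj hi').2.2⟩
  refine Finset.mem_image.2 ⟨(fun i j => (GridLine.side (o i) (b i) ()).entry (p i j), k),
    by simpa using hk, ?_⟩
  ext i j : 2
  rw [hrow, hρ, Function.comp_apply]
  exact GridLine.map_side_entry _ _ _ _ _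

lemma prod_lineTensor_le (hι : 2 < Fintype.card ι) (hodd : Odd (Fintype.card ι))
    {p : ι → Option Bool} (hp : IsMarking p) (α : ℝ) (a : ι → ι → GridSymbol K) :
    (∏ i, lineTensor α (a i)) * ∏ j, lineTensor α (fun i => a i j) ≤
      (if a ∈ blockFreeArrays ι K then 1 else 0) +
        (if a ∈ sideArrays ι K then α ^ (2 * Fintype.card ι) else 0) -
          if a ∈ Finset.univ.image (cornerArray p) then α ^ 4 else 0 := by
  have hblockFree : (0 : ℝ) ≤ if a ∈ blockFreeArrays ι K then 1 else 0 := by positivity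
  have hside : 0 ≤ if a ∈ sideArrays ι K then α ^ (2 * Fintype.card ι) else 0 := by
    split_ifs
    exacts [(even_two_mul _).pow_nonneg α, le_rfl]
  by_cases hcorner : a ∈ Finset.univ.image (cornerArray p)
  · rw [if_pos hcorner]
    obtain ⟨k, -, rfl⟩ := Finset.mem_image.1 hcorner
    rw [prod_lineTensor_cornerArray hι hodd hp]
    linarith
  rw [if_neg hcorner, sub_zero]
  by_cases hzero : (∏ i, lineTensor α (a i)) * ∏ j, lineTensor α (fun i => a i j) = 0
  · rw [hzero]
    positivity
  obtain ⟨ρ, κ, ha⟩ := exists_isLineArray_of_prod_lineTensor_ne_zero hzero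
  rw [ha.prod_lineTensor_mul_prod_lineTensor hι]
  rcases ha.trichotomy hι with ⟨hρ, hκ⟩ | ⟨hρ, hκ⟩ | ⟨o, hρ, hκ⟩
  · rw [if_pos (ha.mem_blockFreeArrays hρ)]
    linarith [prod_weight_mul_prod_weight_le_one hρ hκ α]
  · rw [if_pos (ha.mem_sideArrays hρ)]
    choose o b k hρ using hρ
    choose o' b' k' hκ using hκ
    simp only [hρ, hκ, GridLine.weight, Finset.prod_const, Finset.card_univ, ← pow_add, ← two_mul]
    linarith
  · rw [IsTwoSided.prod_weight_mul_prod_weight hι hodd hρ hκ]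
    linarith [show 0 ≤ α ^ 4 by positivity]

lemma rowColSum_lineTensor_le (hι : 2 < Fintype.card ι)
    (hodd : Odd (Fintype.card ι)) {s : ℕ} (hs : Fintype.card ι < 2 * (s + 1)) (α : ℝ) :
    rowColSum (lineTensor α : (ι → GridSymbol K) → ℝ) ≤
      Fintype.card (ι → ι → GridSymbol Empty) +
        Fintype.card (ι → ι → GridSymbol Unit) * (s ^ Fintype.card ι * Fintype.card K ^ s) *
            α ^ (2 * Fintype.card ι) -
          Fintype.card K * α ^ 4 := by
  have : Nonempty ι := Fintype.card_pos_iff.1 (by omega)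
  obtain ⟨p, hp⟩ := exists_isMarking (ι := ι) (by omega)
  have hcorner : (Finset.univ.image (cornerArray (K := K) p)).card = Fintype.card K := by
    rw [Finset.card_image_of_injective _ (cornerArray_injective hp), Finset.card_univ]
  calc rowColSum (lineTensor α : (ι → GridSymbol K) → ℝ)
      ≤ ∑ a, ((if a ∈ blockFreeArrays ι K then 1 else 0) +
          (if a ∈ sideArrays ι K then α ^ (2 * Fintype.card ι) else 0) -
            if a ∈ Finset.univ.image (cornerArray p) then α ^ 4 else 0) := by
        rw [rowColSum]
        exact Finset.sum_le_sum fun a _ => prod_lineTensor_le hι hodd hp α a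
    _ = (blockFreeArrays ι K).card + (sideArrays ι K).card * α ^ (2 * Fintype.card ι) -
          Fintype.card K * α ^ 4 := by
        simp only [Finset.sum_sub_distrib, Finset.sum_add_distrib, Finset.sum_ite_mem,
          Finset.univ_inter, Finset.sum_const, nsmul_eq_mul, mul_one, hcorner]
    _ ≤ _ := by
        gcongr
        · exact card_blockFreeArrays_le
        · exact (even_two_mul _).pow_nonneg α
        · exact_mod_cast card_sideArrays_le hs

end Arrays

lemma exists_add_mul_pow_lt_mul_pow (c d : ℝ) (s : ℕ) :
    ∃ (N : ℕ) (α : ℝ), c + d * N ^ s * α ^ (2 * (2 * s + 1)) < N * α ^ 4 := by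
  obtain ⟨L, hL⟩ := exists_nat_gt (c + 1)
  obtain ⟨m, hm⟩ := exists_nat_gt (max 1 (d * L ^ s))
  obtain ⟨hm₁, hm⟩ := max_lt_iff.1 hm
  have hm₀ : (m : ℝ) ≠ 0 := by positivity
  have hbound : d * L ^ s / m ^ 2 ≤ 1 := by
    rw [div_le_one (by positivity)]
    nlinarith
  refine ⟨L * m ^ 4, (m : ℝ)⁻¹, ?_⟩
  calc c + d * ((L * m ^ 4 : ℕ) : ℝ) ^ s * (m : ℝ)⁻¹ ^ (2 * (2 * s + 1))
      = c + d * L ^ s / m ^ 2 := by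
        rw [show 2 * (2 * s + 1) = 4 * s + 2 by ring, pow_add, pow_mul, inv_pow, inv_pow]
        push_cast
        rw [mul_pow, inv_pow]
        field_simp
    _ < L := by linarith
    _ = ((L * m ^ 4 : ℕ) : ℝ) * (m : ℝ)⁻¹ ^ 4 := by
        push_cast
        field_simp

/-- The `1`-subdivision of `K_{r,r}` is not a positive graph for odd `r ≥ 3`. -/
theorem subdivisionKrr_not_positive (r : ℕ) (hr : 3 ≤ r) (hodd : Odd r) :
    ¬ GraphPositive (subdivisionKrr r) := by
  intro hpos
  have ⟨s, hs⟩ := hodd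
  obtain ⟨N, α, hlt⟩ := exists_add_mul_pow_lt_mul_pow
    (Fintype.card (Fin r → Fin r → GridSymbol Empty))
    (Fintype.card (Fin r → Fin r → GridSymbol Unit) * s ^ r) s
  have : Nonempty (GridSymbol (Fin N)) := ⟨.blank⟩
  have hnonneg : 0 ≤ rowColSum (lineTensor α : (Fin r → GridSymbol (Fin N)) → ℝ) :=
    hpos.rowColSum_nonneg hodd (lineTensor_comp_equiv α)
  have hle := rowColSum_lineTensor_le (ι := Fin r) (K := Fin N) (s := s)
    (by rwa [Fintype.card_fin]) (by rwa [Fintype.card_fin])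
    (by rw [Fintype.card_fin]; omega) α
  rw [Fintype.card_fin, Fintype.card_fin] at hle
  rw [← hs] at hlt
  linarith
end
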